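/- arXiv:2112.12446 — 6 statements merged into one kernel-verified Lean document; each statement's English description precedes it below -/
import Mathlib

section
/- Coefficient bound for the BDF2 energy remainder: Let ω_{n−1} > 0 and 0 < ω_n ≤ Γ. Define c₁ = ω_{n−1}/(2(1+ω_{n−1})) − 1/4 + 1 − ω_n(1+ω_n)/2, c₂ = 1 − ω_n², c₃ = 1/4 − ω_n³/(2(1+ω_n)). Then max(|c₁|, |c₂|, |c₃|) ≤ (1/4)|ω_{n−1} − 1| + (1+Γ)|ω_n − 1|. -/
/-!
Each coefficient vanishes at `ω₀ = ω₁ = 1`, and the vanishing factors can be pulled out exactly: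
* `c₁ = (ω₀ - 1) / (4 (1 + ω₀)) - (ω₁ - 1) (2 + ω₁) / 2`,
* `c₂ = -(ω₁ - 1) (1 + ω₁)`,
* `c₃ = -(ω₁ - 1) (2 ω₁² + 2 ω₁ + 1) / (4 (1 + ω₁))`.

For positive ratios the cofactor of `ω₀ - 1` is at most `1 / 4`, and those of `ω₁ - 1` are
at most `1 + ω₁ ≤ 1 + Γ` in absolute value.
-/


/-- Coefficient bound for the BDF2 energy remainder (inequality (3.33)):
with `c₁ = ω_{n-1}/(2(1+ω_{n-1})) - 1/4 + 1 - ω_n(1+ω_n)/2`, `c₂ = 1 - ω_n²`,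
`c₃ = 1/4 - ω_n³/(2(1+ω_n))`, one has
`max(|c₁|,|c₂|,|c₃|) ≤ (1/4)|ω_{n-1} - 1| + (1+Γ)|ω_n - 1|`. -/
theorem bdf2_coefficient_bound
    (ω₀ ω₁ Γ : ℝ) (hω₀ : 0 < ω₀) (hω₁ : 0 < ω₁) (hΓ : ω₁ ≤ Γ) :
    let c₁ : ℝ := ω₀ / (2 * (1 + ω₀)) - 1 / 4 + 1 - ω₁ * (1 + ω₁) / 2
    let c₂ : ℝ := 1 - ω₁ ^ 2
    let c₃ : ℝ := 1 / 4 - ω₁ ^ 3 / (2 * (1 + ω₁))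
    max |c₁| (max |c₂| |c₃|) ≤ (1 / 4) * |ω₀ - 1| + (1 + Γ) * |ω₁ - 1| := by
  intro c₁ c₂ c₃
  have h₁ : c₁ = (ω₀ - 1) * (1 / (4 * (1 + ω₀))) - (ω₁ - 1) * ((2 + ω₁) / 2) := by
    simp only [c₁]; field_simp; ring
  have h₂ : c₂ = -((ω₁ - 1) * (1 + ω₁)) := by simp only [c₂]; ring
  have h₃ : c₃ = -((ω₁ - 1) * ((2 * ω₁ ^ 2 + 2 * ω₁ + 1) / (4 * (1 + ω₁)))) := by
    simp only [c₃]; field_simp; ring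
  have hb₀ : |(ω₀ - 1) * (1 / (4 * (1 + ω₀)))| ≤ 1 / 4 * |ω₀ - 1| := by
    have hk : 1 / (4 * (1 + ω₀)) ≤ 1 / 4 := by
      gcongr
      linarith
    rw [abs_mul, abs_of_pos (by positivity : 0 < 1 / (4 * (1 + ω₀))), mul_comm]
    gcongr
  have hb : ∀ k : ℝ, 0 ≤ k → k ≤ 1 + ω₁ → |(ω₁ - 1) * k| ≤ (1 + Γ) * |ω₁ - 1| := by
    intro k hk hk'
    rw [abs_mul, abs_of_nonneg hk, mul_comm]
    gcongr
    linarith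
  have hpos : 0 ≤ 1 / 4 * |ω₀ - 1| := by positivity
  refine max_le ?_ (max_le ?_ ?_)
  · rw [h₁]
    exact (abs_sub _ _).trans
      (add_le_add hb₀ (hb _ (by positivity) (by linarith)))
  · rw [h₂, abs_neg]
    linarith [hb (1 + ω₁) (by positivity) le_rfl]
  · rw [h₃, abs_neg]
    have hk : (2 * ω₁ ^ 2 + 2 * ω₁ + 1) / (4 * (1 + ω₁)) ≤ 1 + ω₁ := by
      rw [div_le_iff₀ (by positivity)]
      nlinarith
    linarith [hb _ (by positivity) hk]
end

section
/- Lower bound on the BDF2 energy quantity: Let H be a real inner product space, e^{n−1}, e^n ∈ H, and 0 < ω_{n−1} ≤ Γ. Then G_n = (ω_{n−1}/(2(1+ω_{n−1})))‖e^n‖² + (1/4)‖2e^n − e^{n−1}‖² satisfies G_n ≥ (0.07/(1+Γ))·ω_{n−1}·(‖e^{n−1}‖² + ‖e^n‖²). -/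
/-! With `s = ω₀ / (1 + ω₀) ∈ (0, 1)`, the monotonicity of the right-hand side in `Γ` reduces the
claim to `Γ = ω₀`, where it is affine in `s`. At `s = 0` it says that a square is nonnegative, and
at `s = 1` that `1.43 ‖e₁‖² - ⟪e₁, e₀⟫ + 0.18 ‖e₀‖²` is nonnegative, which follows from
Cauchy–Schwarz because the discriminant `1 - 4 * 1.43 * 0.18` is negative. -/

/-- Lower bound on the BDF2 energy quantity (inequality (3.35)):
`G_n ≥ (0.07/(1+Γ))·ω_{n-1}·(‖e^{n-1}‖² + ‖e^n‖²)`. -/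
theorem bdf2_energy_lower_bound
    {H : Type*} [NormedAddCommGroup H] [InnerProductSpace ℝ H]
    (e₀ e₁ : H) (ω₀ Γ : ℝ) (hω₀ : 0 < ω₀) (hΓ : ω₀ ≤ Γ) :
    let Gn : ℝ := (ω₀ / (2 * (1 + ω₀))) * ‖e₁‖ ^ 2 + (1 / 4) * ‖(2 : ℝ) • e₁ - e₀‖ ^ 2
    Gn ≥ (0.07 / (1 + Γ)) * ω₀ * (‖e₀‖ ^ 2 + ‖e₁‖ ^ 2) := by
  intro Gn
  have hN : ‖(2 : ℝ) • e₁ - e₀‖ ^ 2 = 4 * ‖e₁‖ ^ 2 - 4 * inner ℝ e₁ e₀ + ‖e₀‖ ^ 2 := by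
    rw [norm_sub_sq_real, norm_smul, real_inner_smul_left, Real.norm_of_nonneg zero_le_two]
    ring
  have h_one : 0.07 * (‖e₀‖ ^ 2 + ‖e₁‖ ^ 2)
      ≤ 1 / 2 * ‖e₁‖ ^ 2 + 1 / 4 * ‖(2 : ℝ) • e₁ - e₀‖ ^ 2 := by
    rw [hN]
    -- Completing the square: `1.43 y² - x y + 0.18 x² = 0.18 (x - (25/9) y)² + c y²`, `c > 0`.
    nlinarith [real_inner_le_norm e₁ e₀, sq_nonneg (‖e₀‖ - 25 / 9 * ‖e₁‖), sq_nonneg ‖e₁‖]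
  have hs : ω₀ / (1 + ω₀) ≤ 1 := (div_le_one (by positivity)).2 (by linarith)
  have hs0 : 0 ≤ ω₀ / (1 + ω₀) := by positivity
  calc 0.07 / (1 + Γ) * ω₀ * (‖e₀‖ ^ 2 + ‖e₁‖ ^ 2)
      ≤ 0.07 / (1 + ω₀) * ω₀ * (‖e₀‖ ^ 2 + ‖e₁‖ ^ 2) := by gcongr
    _ = ω₀ / (1 + ω₀) * (0.07 * (‖e₀‖ ^ 2 + ‖e₁‖ ^ 2)) := by ring
    _ ≤ ω₀ / (1 + ω₀) * (1 / 2 * ‖e₁‖ ^ 2 + 1 / 4 * ‖(2 : ℝ) • e₁ - e₀‖ ^ 2) :=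
        mul_le_mul_of_nonneg_left h_one hs0
    _ ≤ ω₀ / (1 + ω₀) * (1 / 2 * ‖e₁‖ ^ 2) + 1 / 4 * ‖(2 : ℝ) • e₁ - e₀‖ ^ 2 := by
        rw [mul_add]
        exact add_le_add le_rfl (mul_le_of_le_one_left (by positivity) hs)
    _ = Gn := by
        simp only [Gn]
        field_simp
end

section
/- Linear extrapolation error bound in terms of the second derivative: Let H be a real Hilbert space and u : [t_{n−1}, t_{n+1}] → H be twice continuously differentiable, where t_{n−1} < t_n < t_{n+1}, Δt_{n−1} = t_n − t_{n−1}, Δt_n = t_{n+1} − t_n and ω_n = Δt_n/Δt_{n−1}. Then ‖u(t_{n+1}) − u(t_n) − ω_n(u(t_n) − u(t_{n−1}))‖ ≤ ((1+ω_n)/√3)·(Δt_n)^{3/2}·(∫_{t_n}^{t_{n+1}} ‖u''(t)‖² dt)^{1/2} + (ω_n/√3)·(Δt_n + Δt_{n−1})^{3/2}·(∫_{t_{n−1}}^{t_{n+1}} ‖u''(t)‖² dt)^{1/2}. -/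
/-!
Both values `u t₀` and `u t₁` are expanded at the common point `t₂`. For `a < t₂`, Taylor's formula
with integral remainder reads `u a = u t₂ - (t₂ - a) u'(t₂) + R a` with
`R a = ∫ s in a..t₂, (s - a) u''(s)`. With `ω = (t₂ - t₁) / (t₁ - t₀)`, the terms in `u t₂` and in
`u' t₂` cancel in the extrapolation error, which becomes `ω R t₀ - (1 + ω) R t₁`. By Cauchy–Schwarz
and `∫ s in a..t₂, (s - a)² = (t₂ - a)³ / 3`, each remainder has norm at most
`(t₂ - a)^(3/2) / √3 * √(∫ s in a..t₂, ‖u'' s‖²)` (`norm_taylor_remainder_le`), and the triangle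
inequality gives the claim.
-/

/-- Cauchy–Schwarz for continuous functions on an interval, obtained from the discriminant of the
nonnegative quadratic polynomial `x ↦ ∫ (x f + g)²`. -/
theorem integral_mul_le_sqrt_mul_sqrt {a b : ℝ} (hab : a ≤ b) {f g : ℝ → ℝ}
    (hf : ContinuousOn f (Set.Icc a b)) (hg : ContinuousOn g (Set.Icc a b)) :
    ∫ t in a..b, f t * g t ≤
      Real.sqrt (∫ t in a..b, f t ^ 2) * Real.sqrt (∫ t in a..b, g t ^ 2) := by
  have iff : IntervalIntegrable (fun t => f t ^ 2) MeasureTheory.volume a b :=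
    (hf.pow 2).intervalIntegrable_of_Icc hab
  have ifg : IntervalIntegrable (fun t => f t * g t) MeasureTheory.volume a b :=
    (hf.mul hg).intervalIntegrable_of_Icc hab
  have igg : IntervalIntegrable (fun t => g t ^ 2) MeasureTheory.volume a b :=
    (hg.pow 2).intervalIntegrable_of_Icc hab
  have hA : 0 ≤ ∫ t in a..b, f t ^ 2 :=
    intervalIntegral.integral_nonneg hab fun t _ => sq_nonneg _
  have hquad : ∀ x : ℝ, 0 ≤ (∫ t in a..b, f t ^ 2) * (x * x) +
      (2 * ∫ t in a..b, f t * g t) * x + ∫ t in a..b, g t ^ 2 := by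
    intro x
    have h0 : 0 ≤ ∫ t in a..b, (x * f t + g t) ^ 2 :=
      intervalIntegral.integral_nonneg hab fun t _ => sq_nonneg _
    have h1 : (fun t => (x * f t + g t) ^ 2) =
        fun t => (x * x) * f t ^ 2 + (2 * x) * (f t * g t) + g t ^ 2 := by
      funext t; ring
    rw [h1, intervalIntegral.integral_add ((iff.const_mul _).add (ifg.const_mul _)) igg,
      intervalIntegral.integral_add (iff.const_mul _) (ifg.const_mul _),
      intervalIntegral.integral_const_mul, intervalIntegral.integral_const_mul] at h0
    linarith
  have hd := discrim_le_zero hquad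
  rw [discrim] at hd
  rw [← Real.sqrt_mul hA]
  apply Real.le_sqrt_of_sq_le
  linarith

theorem sqrt_integral_sub_sq {a b : ℝ} (hab : a ≤ b) :
    Real.sqrt (∫ t in a..b, (t - a) ^ 2) = (b - a) ^ ((3 : ℝ) / 2) / Real.sqrt 3 := by
  have h : ∫ t in a..b, (t - a) ^ 2 = (b - a) ^ 3 / 3 := by
    rw [intervalIntegral.integral_comp_sub_right (fun t => t ^ 2) a, integral_pow]
    norm_num
  have hba : 0 ≤ b - a := sub_nonneg.2 hab
  rw [h, Real.sqrt_div (by positivity), Real.sqrt_eq_rpow, ← Real.rpow_natCast,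
    ← Real.rpow_mul hba]
  norm_num

/-- Bound on the remainder of the first-order Taylor expansion of `u` at the right endpoint `b`,
evaluated at `a`. -/
theorem norm_taylor_remainder_le {H : Type*} [NormedAddCommGroup H] [InnerProductSpace ℝ H]
    [CompleteSpace H] {u u' u'' : ℝ → H} {a b : ℝ} (hab : a ≤ b)
    (hu' : ∀ t ∈ Set.Icc a b, HasDerivAt u (u' t) t)
    (hu'' : ∀ t ∈ Set.Icc a b, HasDerivAt u' (u'' t) t)
    (hcont : ContinuousOn u'' (Set.Icc a b)) :
    ‖u a - u b + (b - a) • u' b‖ ≤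
      (b - a) ^ ((3 : ℝ) / 2) / Real.sqrt 3 * Real.sqrt (∫ t in a..b, ‖u'' t‖ ^ 2) := by
  have hlin : ContinuousOn (fun t : ℝ => t - a) (Set.Icc a b) := by fun_prop
  -- `s ↦ (s - a) u'(s) - u s` is a primitive of the integrand `(s - a) u''(s)`.
  have hderiv : ∀ t ∈ Set.uIcc a b,
      HasDerivAt (fun s => (s - a) • u' s - u s) ((t - a) • u'' t) t := by
    intro t ht
    rw [Set.uIcc_of_le hab] at ht
    have h := (((hasDerivAt_id t).sub_const a).smul (hu'' t ht)).sub (hu' t ht)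
    rwa [one_smul, add_sub_cancel_right] at h
  have hrem : u a - u b + (b - a) • u' b = ∫ t in a..b, (t - a) • u'' t := by
    rw [intervalIntegral.integral_eq_sub_of_hasDerivAt hderiv
      ((hlin.smul hcont).intervalIntegrable_of_Icc hab)]
    simp only [sub_self, zero_smul]
    abel
  rw [hrem, ← sqrt_integral_sub_sq hab]
  calc ‖∫ t in a..b, (t - a) • u'' t‖
      ≤ ∫ t in a..b, ‖(t - a) • u'' t‖ :=
        intervalIntegral.norm_integral_le_integral_norm hab
    _ = ∫ t in a..b, (t - a) * ‖u'' t‖ := by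
        apply intervalIntegral.integral_congr
        intro t ht
        rw [Set.uIcc_of_le hab] at ht
        simp only [norm_smul, Real.norm_of_nonneg (sub_nonneg.2 ht.1)]
    _ ≤ _ := integral_mul_le_sqrt_mul_sqrt hab hlin hcont.norm

/-- Linear extrapolation error bound (estimate (3.22) with `l = 0`):
for a twice continuously differentiable `u : [t_{n-1}, t_{n+1}] → H`,
`‖u(t_{n+1}) - û^n‖ ≤ ((1+ω_n)/√3)(Δt_n)^{3/2}(∫_{t_n}^{t_{n+1}} ‖u''‖²)^{1/2}
  + (ω_n/√3)(Δt_n + Δt_{n-1})^{3/2}(∫_{t_{n-1}}^{t_{n+1}} ‖u''‖²)^{1/2}`. -/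
theorem extrapolation_error_bound
    {H : Type*} [NormedAddCommGroup H] [InnerProductSpace ℝ H] [CompleteSpace H]
    (u u' u'' : ℝ → H) (t₀ t₁ t₂ : ℝ) (h₀₁ : t₀ < t₁) (h₁₂ : t₁ < t₂)
    (hu' : ∀ t ∈ Set.Icc t₀ t₂, HasDerivAt u (u' t) t)
    (hu'' : ∀ t ∈ Set.Icc t₀ t₂, HasDerivAt u' (u'' t) t)
    (hcont : ContinuousOn u'' (Set.Icc t₀ t₂)) :
    ‖u t₂ - (u t₁ + ((t₂ - t₁) / (t₁ - t₀)) • (u t₁ - u t₀))‖ ≤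
      ((1 + (t₂ - t₁) / (t₁ - t₀)) / Real.sqrt 3) * (t₂ - t₁) ^ ((3 : ℝ) / 2) *
        Real.sqrt (∫ t in t₁..t₂, ‖u'' t‖ ^ 2) +
      (((t₂ - t₁) / (t₁ - t₀)) / Real.sqrt 3) * ((t₂ - t₁) + (t₁ - t₀)) ^ ((3 : ℝ) / 2) *
        Real.sqrt (∫ t in t₀..t₂, ‖u'' t‖ ^ 2) := by
  have h02 := h₀₁.trans h₁₂
  have hsub : Set.Icc t₁ t₂ ⊆ Set.Icc t₀ t₂ := Set.Icc_subset_Icc_left h₀₁.le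
  have hR₁ := norm_taylor_remainder_le h₁₂.le (fun t ht => hu' t (hsub ht))
    (fun t ht => hu'' t (hsub ht)) (hcont.mono hsub)
  have hR₀ := norm_taylor_remainder_le h02.le hu' hu'' hcont
  have hd : 0 < t₁ - t₀ := sub_pos.2 h₀₁
  have hω : 0 ≤ (t₂ - t₁) / (t₁ - t₀) := div_nonneg (sub_nonneg.2 h₁₂.le) hd.le
  have hωd : (t₂ - t₁) / (t₁ - t₀) * (t₁ - t₀) = t₂ - t₁ := div_mul_cancel₀ _ hd.ne'
  rw [sub_add_sub_cancel]
  set ω := (t₂ - t₁) / (t₁ - t₀)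
  -- The coefficient of `u' t₂` vanishes: `ω (t₂ - t₀) = (1 + ω) (t₂ - t₁)`.
  have hcoef : ω * (t₂ - t₀) = (1 + ω) * (t₂ - t₁) := by linear_combination hωd
  have key : u t₂ - (u t₁ + ω • (u t₁ - u t₀)) =
      ω • (u t₀ - u t₂ + (t₂ - t₀) • u' t₂) -
        (1 + ω) • (u t₁ - u t₂ + (t₂ - t₁) • u' t₂) := by
    rw [smul_add, smul_add, smul_smul, smul_smul, hcoef]
    module
  rw [key]
  refine (norm_sub_le _ _).trans ?_
  rw [norm_smul, norm_smul, Real.norm_of_nonneg hω,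
    Real.norm_of_nonneg (by linarith : 0 ≤ 1 + ω)]
  have h₁ := mul_le_mul_of_nonneg_left hR₁ (by linarith : 0 ≤ 1 + ω)
  have h₀ := mul_le_mul_of_nonneg_left hR₀ hω
  refine (add_le_add h₀ h₁).trans (le_of_eq ?_)
  ring
end

section
/- Variable-step BDF2 truncation identity via Taylor's theorem with integral remainder: Let H be a real Hilbert space and u : [t_{n−1}, t_{n+1}] → H be three times continuously differentiable, where t_{n−1} < t_n < t_{n+1}, Δt_{n−1} = t_n − t_{n−1}, Δt_n = t_{n+1} − t_n and ω_n = Δt_n/Δt_{n−1}. Set û^n = u(t_n) + ω_n(u(t_n) − u(t_{n−1})) and 𝒟u^{n+1} = (u(t_{n+1}) − u(t_n)) + (ω_n/(1+ω_n))(u(t_{n+1}) − û^n). Then (1/Δt_n)·𝒟u^{n+1} − u'(t_{n+1}) = ((1+ω_n)/(2Δt_n))·∫_{t_n}^{t_{n+1}} (t − t_n)² u'''(t) dt − (ω_n/(2(Δt_n + Δt_{n−1})))·∫_{t_{n−1}}^{t_{n+1}} (t − t_{n−1})² u'''(t) dt. -/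
/-!
Two integrations by parts give, for `a ≤ b`,
`∫ t in a..b, (t - a)² u'''(t) = (b - a)² u''(b) - 2 (b - a) u'(b) + 2 (u(b) - u(a))`,
which is Taylor's theorem expanded at the right endpoint `b`. Applied on `[t₁, t₂]` and on
`[t₀, t₂]`, it turns the right-hand side of the identity into a combination of `u''(t₂)`, `u'(t₂)`,
`u(t₂)`, `u(t₁)` and `u(t₀)`. The weights are such that `u''(t₂)` cancels and `u'(t₂)` has
coefficient `-1`; what remains is the BDF2 difference.
-/

/-- Taylor's theorem at the right endpoint, with the remainder as an integral weighted by
`(t - a)²`. The integrand has the explicit antiderivative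
`(t - a)² u''(t) - 2 (t - a) u'(t) + 2 u(t)`. -/
lemma integral_sq_smul_third_deriv
    {H : Type*} [NormedAddCommGroup H] [NormedSpace ℝ H] [CompleteSpace H]
    (u u' u'' u''' : ℝ → H) (a b : ℝ) (hab : a ≤ b)
    (hu' : ∀ t ∈ Set.Icc a b, HasDerivAt u (u' t) t)
    (hu'' : ∀ t ∈ Set.Icc a b, HasDerivAt u' (u'' t) t)
    (hu''' : ∀ t ∈ Set.Icc a b, HasDerivAt u'' (u''' t) t)
    (hcont : ContinuousOn u''' (Set.Icc a b)) :
    (∫ t in a..b, (t - a) ^ 2 • u''' t) =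
      (b - a) ^ 2 • u'' b - (2 * (b - a)) • u' b + (2 : ℝ) • (u b - u a) := by
  have hderiv : ∀ t ∈ Set.uIcc a b,
      HasDerivAt (fun t => (t - a) ^ 2 • u'' t - (2 * (t - a)) • u' t + (2 : ℝ) • u t)
        ((t - a) ^ 2 • u''' t) t := by
    intro t ht
    rw [Set.uIcc_of_le hab] at ht
    have hlin : HasDerivAt (fun t : ℝ => t - a) 1 t := (hasDerivAt_id t).sub_const a
    have h := (((hlin.pow 2).smul (hu''' t ht)).sub
      ((hlin.const_mul 2).smul (hu'' t ht))).add ((hu' t ht).const_smul (2 : ℝ))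
    refine h.congr_deriv ?_
    simp only [Pi.pow_apply]
    push_cast
    module
  have hint : IntervalIntegrable (fun t => (t - a) ^ 2 • u''' t) MeasureTheory.volume a b := by
    apply ContinuousOn.intervalIntegrable
    rw [Set.uIcc_of_le hab]
    exact ContinuousOn.smul (by fun_prop) hcont
  rw [intervalIntegral.integral_eq_sub_of_hasDerivAt hderiv hint]
  module


/-- Variable-step BDF2 truncation identity via Taylor's theorem with integral
remainder (equation below (3.20)): for three times continuously differentiable
`u : [t_{n-1}, t_{n+1}] → H`,
`(1/Δt_n)·𝒟u^{n+1} - u'(t_{n+1})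
  = ((1+ω_n)/(2Δt_n))·∫_{t_n}^{t_{n+1}} (t - t_n)² u'''(t) dt
  - (ω_n/(2(Δt_n + Δt_{n-1})))·∫_{t_{n-1}}^{t_{n+1}} (t - t_{n-1})² u'''(t) dt`. -/
theorem bdf2_truncation_identity
    {H : Type*} [NormedAddCommGroup H] [InnerProductSpace ℝ H] [CompleteSpace H]
    (u u' u'' u''' : ℝ → H) (t₀ t₁ t₂ : ℝ) (h₀₁ : t₀ < t₁) (h₁₂ : t₁ < t₂)
    (hu' : ∀ t ∈ Set.Icc t₀ t₂, HasDerivAt u (u' t) t)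
    (hu'' : ∀ t ∈ Set.Icc t₀ t₂, HasDerivAt u' (u'' t) t)
    (hu''' : ∀ t ∈ Set.Icc t₀ t₂, HasDerivAt u'' (u''' t) t)
    (hcont : ContinuousOn u''' (Set.Icc t₀ t₂)) :
    let ω : ℝ := (t₂ - t₁) / (t₁ - t₀)
    let uhat : H := u t₁ + ω • (u t₁ - u t₀)
    let D : H := (u t₂ - u t₁) + (ω / (1 + ω)) • (u t₂ - uhat)
    (1 / (t₂ - t₁)) • D - u' t₂ =
      ((1 + ω) / (2 * (t₂ - t₁))) • (∫ t in t₁..t₂, (t - t₁) ^ 2 • u''' t) -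
      (ω / (2 * ((t₂ - t₁) + (t₁ - t₀)))) • (∫ t in t₀..t₂, (t - t₀) ^ 2 • u''' t) := by
  intro ω uhat D
  have hsub : Set.Icc t₁ t₂ ⊆ Set.Icc t₀ t₂ := Set.Icc_subset_Icc_left h₀₁.le
  rw [integral_sq_smul_third_deriv u u' u'' u''' t₁ t₂ h₁₂.le (fun t ht => hu' t (hsub ht))
      (fun t ht => hu'' t (hsub ht)) (fun t ht => hu''' t (hsub ht)) (hcont.mono hsub),
    integral_sq_smul_third_deriv u u' u'' u''' t₀ t₂ (h₀₁.trans h₁₂).le hu' hu'' hu''' hcont]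
  simp only [D, uhat, ω]
  have hs : 0 < t₁ - t₀ := sub_pos.2 h₀₁
  have hk : 0 < t₂ - t₁ := sub_pos.2 h₁₂
  -- In terms of the two step sizes every denominator is a product of `s`, `k` and `k + s`.
  have hks : t₂ - t₀ = (t₂ - t₁) + (t₁ - t₀) := by ring
  rw [hks]
  generalize t₁ - t₀ = s at *
  generalize t₂ - t₁ = k at *
  have hω : 1 + k / s = (k + s) / s := by field_simp; ring
  have hks0 : k + s ≠ 0 := by positivity
  rw [hω]
  match_scalars <;> field_simp <;> ring
end

section
/- Variable-step BDF2 truncation error bound: Let H be a real Hilbert space and u : [t_{n−1}, t_{n+1}] → H be three times continuously differentiable, where t_{n−1} < t_n < t_{n+1}, Δt_{n−1} = t_n − t_{n−1}, Δt_n = t_{n+1} − t_n and ω_n = Δt_n/Δt_{n−1}. With û^n = u(t_n) + ω_n(u(t_n) − u(t_{n−1})) and 𝒟u^{n+1} = (u(t_{n+1}) − u(t_n)) + (ω_n/(1+ω_n))(u(t_{n+1}) − û^n), one has ‖(1/Δt_n)·𝒟u^{n+1} − u'(t_{n+1})‖² ≤ ((1+ω_n)²/10)·(Δt_n)³·∫_{t_n}^{t_{n+1}}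 ‖u'''(t)‖² dt + (ω_n²/10)·(Δt_n + Δt_{n−1})³·∫_{t_{n−1}}^{t_{n+1}} ‖u'''(t)‖² dt. -/
/-! Expanding `u t₁` and `u t₀` about `t₂`, the constant, first and second order terms of the BDF2
formula match those of `u' t₂`, so the truncation error is exactly
`((1 + ω) / k) • R₁ - (ω / L) • R₀`, with `k = t₂ - t₁`, `L = t₂ - t₀` and `R₁`, `R₀` the two
Taylor remainders `∫ s in a..t₂, ((s - a) ^ 2 / 2) • u''' s` for `a = t₁`, `a = t₀`. Cauchy–Schwarz
against the weight `(s - a) ^ 2 / 2`, whose square has integral `(t₂ - a) ^ 5 / 20`, bounds each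
remainder (`norm_taylor_remainder_sq_le`), and `‖x - y‖² ≤ 2 (‖x‖² + ‖y‖²)` gives the constants
`1 / 10`. -/

theorem integral_weight_sq (a b : ℝ) :
    ∫ s in a..b, ((s - a) ^ 2 / 2) ^ 2 = (b - a) ^ 5 / 20 := by
  have h : ∀ s ∈ Set.uIcc a b,
      HasDerivAt (fun s : ℝ => (s - a) ^ 5 / 20) (((s - a) ^ 2 / 2) ^ 2) s := by
    intro s _
    have h1 := ((((hasDerivAt_id s).sub_const a).pow 5).div_const 20)
    refine h1.congr_deriv ?_
    simp only [id]
    push_cast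
    ring
  rw [intervalIntegral.integral_eq_sub_of_hasDerivAt h
    (Continuous.intervalIntegrable (by fun_prop) _ _)]
  simp

/-- Cauchy–Schwarz against the weight `(s - a) ^ 2 / 2`, from the nonnegativity of the integral of
`(g - c * weight) ^ 2` for the minimizing `c`. -/
theorem sq_integral_weight_mul_le {a b : ℝ} (hab : a < b) {g : ℝ → ℝ}
    (hg : ContinuousOn g (Set.Icc a b)) :
    (∫ s in a..b, (s - a) ^ 2 / 2 * g s) ^ 2 ≤ (b - a) ^ 5 / 20 * ∫ s in a..b, g s ^ 2 := by
  rw [← Set.uIcc_of_le hab.le] at hg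
  have hw : ContinuousOn (fun s : ℝ => (s - a) ^ 2 / 2) (Set.uIcc a b) := by fun_prop
  set W : ℝ := (b - a) ^ 5 / 20 with hW
  have hWpos : 0 < W := by
    have : 0 < b - a := sub_pos.2 hab
    positivity
  set J := ∫ s in a..b, (s - a) ^ 2 / 2 * g s with hJ
  have i1 : IntervalIntegrable (fun s => g s ^ 2) MeasureTheory.volume a b :=
    (hg.pow 2).intervalIntegrable
  have i2 : IntervalIntegrable (fun s => (s - a) ^ 2 / 2 * g s) MeasureTheory.volume a b :=
    (hw.mul hg).intervalIntegrable
  have i3 : IntervalIntegrable (fun s : ℝ => ((s - a) ^ 2 / 2) ^ 2) MeasureTheory.volume a b :=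
    (hw.pow 2).intervalIntegrable
  have key : ∫ s in a..b, (g s - J / W * ((s - a) ^ 2 / 2)) ^ 2
      = (∫ s in a..b, g s ^ 2) - 2 * (J / W) * J + (J / W) ^ 2 * W := by
    have e : ∀ s, (g s - J / W * ((s - a) ^ 2 / 2)) ^ 2
        = g s ^ 2 - 2 * (J / W) * ((s - a) ^ 2 / 2 * g s)
          + (J / W) ^ 2 * ((s - a) ^ 2 / 2) ^ 2 := fun s => by ring
    simp_rw [e]
    rw [intervalIntegral.integral_add (i1.sub (i2.const_mul _)) (i3.const_mul _),
      intervalIntegral.integral_sub i1 (i2.const_mul _),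
      intervalIntegral.integral_const_mul, intervalIntegral.integral_const_mul,
      integral_weight_sq]
  have nonneg : 0 ≤ ∫ s in a..b, (g s - J / W * ((s - a) ^ 2 / 2)) ^ 2 :=
    intervalIntegral.integral_nonneg hab.le fun s _ => sq_nonneg _
  rw [key] at nonneg
  have e : W * ((∫ s in a..b, g s ^ 2) - 2 * (J / W) * J + (J / W) ^ 2 * W)
      = W * (∫ s in a..b, g s ^ 2) - J ^ 2 := by
    field_simp
    ring
  have := mul_nonneg hWpos.le nonneg
  rw [e] at this
  linarith

/-- The vector in the norm equals `∫ s in a..b, ((s - a) ^ 2 / 2) • u''' s`, the integral form of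
the remainder of the second order expansion of `u a` about `b`. -/
theorem norm_taylor_remainder_sq_le
    {H : Type*} [NormedAddCommGroup H] [NormedSpace ℝ H] [CompleteSpace H]
    {u u' u'' u''' : ℝ → H} {a b : ℝ} (hab : a < b)
    (hu' : ∀ t ∈ Set.Icc a b, HasDerivAt u (u' t) t)
    (hu'' : ∀ t ∈ Set.Icc a b, HasDerivAt u' (u'' t) t)
    (hu''' : ∀ t ∈ Set.Icc a b, HasDerivAt u'' (u''' t) t)
    (hcont : ContinuousOn u''' (Set.Icc a b)) :
    ‖u b - (b - a) • u' b + ((b - a) ^ 2 / 2) • u'' b - u a‖ ^ 2 ≤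
      (b - a) ^ 5 / 20 * ∫ t in a..b, ‖u''' t‖ ^ 2 := by
  -- Differentiating the second order expansion in its base point leaves only the top order term.
  have hF : ∀ s ∈ Set.uIcc a b,
      HasDerivAt (fun s => u s - (s - a) • u' s + ((s - a) ^ 2 / 2) • u'' s)
        (((s - a) ^ 2 / 2) • u''' s) s := by
    intro s hs
    rw [Set.uIcc_of_le hab.le] at hs
    have h1 : HasDerivAt (fun s : ℝ => s - a) 1 s := (hasDerivAt_id s).sub_const a
    have h2 : HasDerivAt (fun s : ℝ => (s - a) ^ 2 / 2) (s - a) s := by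
      refine ((h1.pow 2).div_const 2).congr_deriv ?_
      push_cast
      ring
    refine (((hu' s hs).sub (h1.smul (hu'' s hs))).add (h2.smul (hu''' s hs))).congr_deriv ?_
    module
  have hc : ContinuousOn (fun s : ℝ => ((s - a) ^ 2 / 2) • u''' s) (Set.uIcc a b) := by
    rw [Set.uIcc_of_le hab.le]
    exact ContinuousOn.smul (by fun_prop) hcont
  have hint := intervalIntegral.integral_eq_sub_of_hasDerivAt hF hc.intervalIntegrable
  have e : u b - (b - a) • u' b + ((b - a) ^ 2 / 2) • u'' b - u a
      = ∫ s in a..b, ((s - a) ^ 2 / 2) • u''' s := by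
    rw [hint]
    simp
  rw [e]
  refine le_trans ?_ (sq_integral_weight_mul_le hab hcont.norm)
  refine pow_le_pow_left₀ (norm_nonneg _) ?_ 2
  refine (intervalIntegral.norm_integral_le_integral_norm hab.le).trans (le_of_eq ?_)
  refine intervalIntegral.integral_congr fun s _ => ?_
  have h0 : (0 : ℝ) ≤ (s - a) ^ 2 / 2 := by positivity
  simp only [norm_smul, Real.norm_of_nonneg h0]

/-- Variable-step BDF2 truncation error bound (part of estimate (3.20)):
`‖(1/Δt_n)·𝒟u^{n+1} - u'(t_{n+1})‖²
  ≤ ((1+ω_n)²/10)(Δt_n)³ ∫_{t_n}^{t_{n+1}} ‖u'''‖²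
  + (ω_n²/10)(Δt_n + Δt_{n-1})³ ∫_{t_{n-1}}^{t_{n+1}} ‖u'''‖²`. -/
theorem bdf2_truncation_error_bound
    {H : Type*} [NormedAddCommGroup H] [InnerProductSpace ℝ H] [CompleteSpace H]
    (u u' u'' u''' : ℝ → H) (t₀ t₁ t₂ : ℝ) (h₀₁ : t₀ < t₁) (h₁₂ : t₁ < t₂)
    (hu' : ∀ t ∈ Set.Icc t₀ t₂, HasDerivAt u (u' t) t)
    (hu'' : ∀ t ∈ Set.Icc t₀ t₂, HasDerivAt u' (u'' t) t)
    (hu''' : ∀ t ∈ Set.Icc t₀ t₂, HasDerivAt u'' (u''' t) t)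
    (hcont : ContinuousOn u''' (Set.Icc t₀ t₂)) :
    let ω : ℝ := (t₂ - t₁) / (t₁ - t₀)
    let uhat : H := u t₁ + ω • (u t₁ - u t₀)
    let D : H := (u t₂ - u t₁) + (ω / (1 + ω)) • (u t₂ - uhat)
    ‖(1 / (t₂ - t₁)) • D - u' t₂‖ ^ 2 ≤
      ((1 + ω) ^ 2 / 10) * (t₂ - t₁) ^ 3 * (∫ t in t₁..t₂, ‖u''' t‖ ^ 2) +
      (ω ^ 2 / 10) * ((t₂ - t₁) + (t₁ - t₀)) ^ 3 * (∫ t in t₀..t₂, ‖u''' t‖ ^ 2) := by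
  intro ω uhat D
  have hk : 0 < t₂ - t₁ := sub_pos.2 h₁₂
  have hh : 0 < t₁ - t₀ := sub_pos.2 h₀₁
  have hsub : Set.Icc t₁ t₂ ⊆ Set.Icc t₀ t₂ := Set.Icc_subset_Icc_left h₀₁.le
  have b₁ := norm_taylor_remainder_sq_le h₁₂ (fun t ht => hu' t (hsub ht))
    (fun t ht => hu'' t (hsub ht)) (fun t ht => hu''' t (hsub ht)) (hcont.mono hsub)
  have b₀ := norm_taylor_remainder_sq_le (h₀₁.trans h₁₂) hu' hu'' hu''' hcont
  have hL : t₂ - t₀ = (t₂ - t₁) + (t₁ - t₀) := by ring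
  rw [hL] at b₀
  set R₁ := u t₂ - (t₂ - t₁) • u' t₂ + ((t₂ - t₁) ^ 2 / 2) • u'' t₂ - u t₁ with hR₁
  set R₀ := u t₂ - ((t₂ - t₁) + (t₁ - t₀)) • u' t₂
    + (((t₂ - t₁) + (t₁ - t₀)) ^ 2 / 2) • u'' t₂ - u t₀ with hR₀
  set k := t₂ - t₁
  set h := t₁ - t₀
  have hω : ω = k / h := rfl
  have hE : (1 / k) • D - u' t₂ = ((1 + ω) / k) • R₁ - (ω / (k + h)) • R₀ := by
    have hkh : k + h ≠ 0 := by positivity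
    have hhk : h + k ≠ 0 := by positivity
    simp only [D, uhat, hR₁, hR₀, hω]
    match_scalars <;> field_simp <;> ring
  have par : ∀ x y : H, ‖x - y‖ ^ 2 ≤ 2 * (‖x‖ ^ 2 + ‖y‖ ^ 2) := by
    intro x y
    nlinarith [parallelogram_law_with_norm ℝ x y, sq_nonneg ‖x + y‖]
  rw [hE]
  refine (par _ _).trans ?_
  rw [norm_smul, norm_smul, mul_pow, mul_pow, Real.norm_eq_abs, Real.norm_eq_abs, sq_abs, sq_abs]
  have c₁ := mul_le_mul_of_nonneg_left b₁ (sq_nonneg ((1 + ω) / k))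
  have c₀ := mul_le_mul_of_nonneg_left b₀ (sq_nonneg (ω / (k + h)))
  generalize (∫ t in t₁..t₂, ‖u''' t‖ ^ 2) = I₁ at *
  generalize (∫ t in t₀..t₂, ‖u''' t‖ ^ 2) = I₀ at *
  have e₁ : ((1 + ω) / k) ^ 2 * (k ^ 5 / 20 * I₁) = (1 + ω) ^ 2 / 20 * k ^ 3 * I₁ := by
    field_simp
  have e₀ : (ω / (k + h)) ^ 2 * ((k + h) ^ 5 / 20 * I₀) = ω ^ 2 / 20 * (k + h) ^ 3 * I₀ := by
    have hkh : k + h ≠ 0 := by positivity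
    field_simp
  rw [e₁] at c₁
  rw [e₀] at c₀
  linarith
end

section
/- Nonnegativity of the grad-div absorption coefficients m_k: Let α > 0 and Γ > 0 satisfy Γ³(1+2Γ) + Γ(1+2Γ)(1+Γ) ≤ 17α (i.e. Γ is at most the positive root Γ*(α) of the polynomial x³(1+2x)/α + x(1+2x)(1+x)/α − 17). Then for any step ratios 0 < ω_k ≤ Γ and 0 ≤ ω_{k+1} ≤ Γ, the quantity m_k = (17/18)·(1/ω_k) − (1+2Γ)(1+Γ)/(18α) − Γ(1+2Γ)ω_{k+1}/(18α) is nonnegative. -/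
/-- Nonnegativity of the grad-div absorption coefficients `m_k` (condition
(3.49)): if `Γ³(1+2Γ) + Γ(1+2Γ)(1+Γ) ≤ 17α` then for step ratios
`0 < ω_k ≤ Γ` and `0 ≤ ω_{k+1} ≤ Γ`,
`m_k = (17/18)(1/ω_k) - (1+2Γ)(1+Γ)/(18α) - Γ(1+2Γ)ω_{k+1}/(18α) ≥ 0`. -/
theorem m_k_nonneg
    (α Γ ωk ωk1 : ℝ) (hα : 0 < α) (hΓ : 0 < Γ)
    (hroot : Γ ^ 3 * (1 + 2 * Γ) + Γ * (1 + 2 * Γ) * (1 + Γ) ≤ 17 * α)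
    (hωk : 0 < ωk) (hωkΓ : ωk ≤ Γ) (hωk1 : 0 ≤ ωk1) (hωk1Γ : ωk1 ≤ Γ) :
    0 ≤ (17 / 18) * (1 / ωk) - (1 + 2 * Γ) * (1 + Γ) / (18 * α) -
      Γ * (1 + 2 * Γ) * ωk1 / (18 * α) := by
  -- After clearing denominators the numerator is smallest at `ωk = ωk1 = Γ`,
  -- where its nonnegativity is exactly `hroot`.
  have key : ωk * ((1 + 2 * Γ) * (1 + Γ) + Γ * (1 + 2 * Γ) * ωk1) ≤ 17 * α :=
    calc ωk * ((1 + 2 * Γ) * (1 + Γ) + Γ * (1 + 2 * Γ) * ωk1)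
        ≤ Γ * ((1 + 2 * Γ) * (1 + Γ) + Γ * (1 + 2 * Γ) * Γ) := by gcongr
      _ = Γ ^ 3 * (1 + 2 * Γ) + Γ * (1 + 2 * Γ) * (1 + Γ) := by ring
      _ ≤ 17 * α := hroot
  have hm : (17 / 18) * (1 / ωk) - (1 + 2 * Γ) * (1 + Γ) / (18 * α) -
      Γ * (1 + 2 * Γ) * ωk1 / (18 * α) =
      (17 * α - ωk * ((1 + 2 * Γ) * (1 + Γ) + Γ * (1 + 2 * Γ) * ωk1)) / (18 * α * ωk) := by
    field_simp
    ring
  rw [hm]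
  exact div_nonneg (sub_nonneg.mpr key) (by positivity)
end
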